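/- The translative covering density of the regular octahedron satisfies θᵗ(C₃) ≥ 1 + 4/6¹⁰ > 1 + 6.6×10⁻⁸. -/

import Mathlib

open Set Pointwise MeasureTheory ENNReal Filter

/-- The regular octahedron `C₃` (the ℓ¹-ball of radius 2 in ℝ³). -/
def C₃ : Set (Fin 3 → ℝ) := {p | |p 0| + |p 1| + |p 2| ≤ 2}

/-- The cube `[-R, R]³` in ℝ³. -/
def cube (R : ℝ) : Set (Fin 3 → ℝ) := {p | ∀ i, |p i| ≤ R}

/-- The (lower) density of the translative covering `K + X`: the liminf, over
large cubes, of the total volume of the pieces of the translates inside the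
cube divided by the volume of the cube. -/
noncomputable def coveringDensity (K : Set (Fin 3 → ℝ)) (X : Set (Fin 3 → ℝ)) : ℝ≥0∞ :=
  Filter.liminf
    (fun R : ℝ => (∑' x : X, volume (cube R ∩ ((x : Fin 3 → ℝ) +ᵥ K))) / volume (cube R))
    Filter.atTop

/-- The translative covering density `θᵗ(K)`: the infimum of densities over all
translative coverings of ℝ³ by a discrete set of translates of `K`. -/
noncomputable def translativeCoveringDensity (K : Set (Fin 3 → ℝ)) : ℝ≥0∞ :=
  ⨅ (X : Set (Fin 3 → ℝ)) (_ : DiscreteTopology ↥X ∧ ⋃ x ∈ X, x +ᵥ K = univ),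
    coveringDensity K X

/-- If a center `t` is within `2` of a point `v` that lies slightly beyond the face of the ball
around `0`, and `t` is almost at distance `4` from `0`, then `t` almost dominates `v`. -/
lemma center_ge_of_near {v₁ v₂ v₃ t₁ t₂ t₃ : ℝ} (h₁ : 0.04 ≤ v₁) (h₂ : 0 ≤ v₂) (h₃ : 0 ≤ v₃)
    (hv : v₁ + v₂ + v₃ = 2.001) (ht : |v₁ - t₁| + |v₂ - t₂| + |v₃ - t₃| ≤ 2)
    (hs : 3.925 ≤ |t₁| + |t₂| + |t₃|) : v₁ - 0.038 ≤ t₁ := by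
  have e₂ : |t₂| ≤ |v₂ - t₂| + v₂ := by
    rw [abs_le]; constructor <;> linarith [neg_abs_le (v₂ - t₂), le_abs_self (v₂ - t₂)]
  have e₃ : |t₃| ≤ |v₃ - t₃| + v₃ := by
    rw [abs_le]; constructor <;> linarith [neg_abs_le (v₃ - t₃), le_abs_self (v₃ - t₃)]
  rcases abs_cases t₁ with ⟨h, -⟩ | ⟨h, -⟩ <;> linarith [le_abs_self (v₁ - t₁)]

lemma centers_ge_of_near {v₁ v₂ v₃ t₁ t₂ t₃ : ℝ} (h₁ : 0.04 ≤ v₁) (h₂ : 0.04 ≤ v₂)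
    (h₃ : 0.04 ≤ v₃) (hv : v₁ + v₂ + v₃ = 2.001)
    (ht : |v₁ - t₁| + |v₂ - t₂| + |v₃ - t₃| ≤ 2) (hs : 3.925 ≤ |t₁| + |t₂| + |t₃|) :
    v₁ - 0.038 ≤ t₁ ∧ v₂ - 0.038 ≤ t₂ ∧ v₃ - 0.038 ≤ t₃ ∧ 3.925 ≤ t₁ + t₂ + t₃ ∧
      t₁ + t₂ + t₃ ≤ 4.001 := by
  have e₁ := center_ge_of_near h₁ (by linarith) (by linarith) hv ht hs
  have e₂ := center_ge_of_near (v₁ := v₂) (v₂ := v₁) (v₃ := v₃) (t₁ := t₂) (t₂ := t₁) (t₃ := t₃)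
    h₂ (by linarith) (by linarith) (by linarith) (by linarith) (by linarith)
  have e₃ := center_ge_of_near (v₁ := v₃) (v₂ := v₁) (v₃ := v₂) (t₁ := t₃) (t₂ := t₁) (t₃ := t₂)
    h₃ (by linarith) (by linarith) (by linarith) (by linarith) (by linarith)
  refine ⟨e₁, e₂, e₃, ?_, ?_⟩
  · rwa [abs_of_nonneg (by linarith : 0 ≤ t₁), abs_of_nonneg (by linarith : 0 ≤ t₂),
      abs_of_nonneg (by linarith : 0 ≤ t₃)] at hs
  · linarith [neg_abs_le (v₁ - t₁), neg_abs_le (v₂ - t₂), neg_abs_le (v₃ - t₃)]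

/-- The centers in `P` form a covering by `ℓ¹`-balls of radius `2`. -/
def CoversL1 (P : ℝ → ℝ → ℝ → Prop) : Prop :=
  ∀ x y z, ∃ a b c, P a b c ∧ |x - a| + |y - b| + |z - c| ≤ 2

/-- Distinct centers in `P` whose midpoint lies in `[-1, 4]³` have `ℓ¹`-distance
at least `3.925`. -/
def AlmostPacksL1 (P : ℝ → ℝ → ℝ → Prop) : Prop :=
  ∀ a b c a' b' c', P a b c → P a' b' c' → -2 ≤ a + a' → a + a' ≤ 8 → -2 ≤ b + b' → b + b' ≤ 8 →
    -2 ≤ c + c' → c + c' ≤ 8 → |a - a'| + |b - b'| + |c - c'| < 3.925 → a = a' ∧ b = b' ∧ c = c'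

/-- A center whose ball covers a point just beyond the face `x + y + z = 2` of the ball
around `0`. -/
lemma exists_center_beyond_face {P : ℝ → ℝ → ℝ → Prop} (h0 : P 0 0 0) (cov : CoversL1 P)
    (sep : AlmostPacksL1 P) {v₁ v₂ v₃ : ℝ} (h₁ : 0.04 ≤ v₁) (h₂ : 0.04 ≤ v₂) (h₃ : 0.04 ≤ v₃)
    (hv : v₁ + v₂ + v₃ = 2.001) :
    ∃ t₁ t₂ t₃, P t₁ t₂ t₃ ∧ v₁ - 0.038 ≤ t₁ ∧ v₂ - 0.038 ≤ t₂ ∧ v₃ - 0.038 ≤ t₃ ∧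
      3.925 ≤ t₁ + t₂ + t₃ ∧ t₁ + t₂ + t₃ ≤ 4.001 ∧
      |v₁ - t₁| + |v₂ - t₂| + |v₃ - t₃| ≤ 2 := by
  obtain ⟨t₁, t₂, t₃, hP, ht⟩ := cov v₁ v₂ v₃
  have a₁ := abs_le.1 (show |v₁ - t₁| ≤ 2 by linarith [abs_nonneg (v₂ - t₂), abs_nonneg (v₃ - t₃)])
  have a₂ := abs_le.1 (show |v₂ - t₂| ≤ 2 by linarith [abs_nonneg (v₁ - t₁), abs_nonneg (v₃ - t₃)])
  have a₃ := abs_le.1 (show |v₃ - t₃| ≤ 2 by linarith [abs_nonneg (v₁ - t₁), abs_nonneg (v₂ - t₂)])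
  have hs : 3.925 ≤ |t₁| + |t₂| + |t₃| := by
    by_contra! hlt
    obtain ⟨rfl, rfl, rfl⟩ := sep t₁ t₂ t₃ 0 0 0 hP h0 (by linarith) (by linarith) (by linarith)
      (by linarith) (by linarith) (by linarith) (by simpa using hlt)
    linarith [le_abs_self (v₁ - 0), le_abs_self (v₂ - 0), le_abs_self (v₃ - 0)]
  obtain ⟨e₁, e₂, e₃, e₄, e₅⟩ := centers_ge_of_near h₁ h₂ h₃ hv ht hs
  exact ⟨t₁, t₂, t₃, hP, e₁, e₂, e₃, e₄, e₅, ht⟩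

/-- Beside a ball with center `(a, b, c)` sitting on the face `x + y + z = 2`, the gap next to the
edge `z = 0` can only be covered at height `ζ` by a ball that sits almost entirely in the
direction of the second axis. -/
lemma exists_center_in_gap {P : ℝ → ℝ → ℝ → Prop} (h0 : P 0 0 0) (cov : CoversL1 P)
    (sep : AlmostPacksL1 P) {a b c ζ : ℝ} (hP : P a b c) (ha : 0 ≤ a) (hb : 0.04 ≤ b)
    (hl : 3.925 ≤ a + b + c) (hu : a + b + c ≤ 4.001)
    (hζ : 0.04 ≤ ζ) (hbζ : b + ζ ≤ 1.922) (hcζ : c < ζ + 1.8485) (hζc : ζ + 0.1145 < c) :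
    ∃ t₁ t₂ t₃, P t₁ t₂ t₃ ∧ 1.924 - b - ζ ≤ t₁ ∧ t₁ ≤ 2.0765 - b - ζ ∧ ζ - 0.038 ≤ t₃ ∧
      t₃ ≤ ζ + 0.1145 ∧ 3.925 ≤ t₁ + t₂ + t₃ ∧ t₁ + t₂ + t₃ ≤ 4.001 := by
  obtain ⟨t₁, t₂, t₃, hPt, e₁, e₂, e₃, e₄, e₅, ht⟩ := exists_center_beyond_face h0 cov sep
    (v₁ := 2.001 - b - 0.039 - ζ) (v₂ := b + 0.039) (v₃ := ζ)
    (by linarith) (by linarith) hζ (by ring)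
  have hfar : 3.925 ≤ |a - t₁| + |b - t₂| + |c - t₃| := by
    by_contra! hlt
    obtain ⟨rfl, rfl, rfl⟩ := sep a b c t₁ t₂ t₃ hP hPt (by linarith) (by linarith) (by linarith)
      (by linarith) (by linarith) (by linarith) hlt
    linarith [neg_abs_le (2.001 - b - 0.039 - ζ - a), le_abs_self (b + 0.039 - b),
      neg_abs_le (ζ - c)]
  rw [abs_of_nonpos (by linarith : b - t₂ ≤ 0)] at hfar
  refine ⟨t₁, t₂, t₃, hPt, by linarith, ?_, e₃, ?_, e₄, e₅⟩ <;>
    rcases abs_cases (a - t₁) with ⟨h, _⟩ | ⟨h, _⟩ <;>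
    rcases abs_cases (c - t₃) with ⟨h', _⟩ | ⟨h', _⟩ <;> linarith

lemma not_packs_of_center_le {P : ℝ → ℝ → ℝ → Prop} (h0 : P 0 0 0) (cov : CoversL1 P)
    (sep : AlmostPacksL1 P) {a b c : ℝ} (hP : P a b c) (ha : 1.163 ≤ a) (hb : 0.362 ≤ b)
    (hc : 0.362 ≤ c) (hl : 3.925 ≤ a + b + c) (hu : a + b + c ≤ 4.001) (hbc : b ≤ c) :
    False := by
  obtain ⟨ζ, h₁, h₂, h₃, h₄⟩ : ∃ ζ : ℝ, 0.04 ≤ ζ ∧ b + ζ ≤ 1.762 ∧ c < ζ + 1.8485 ∧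
      ζ + 0.2745 < c := by
    rcases le_total c 1.85 with h | h
    · exact ⟨0.05, by norm_num, by linarith, by linarith, by linarith⟩
    · exact ⟨0.65, by norm_num, by linarith, by linarith, by linarith⟩
  obtain ⟨t₁, t₂, t₃, hPt, e₁, e₂, e₃, e₄, e₅, e₆⟩ := exists_center_in_gap h0 cov sep hP
    (by linarith) (by linarith) hl hu h₁ (by linarith) h₃ (by linarith)
  obtain ⟨s₁, s₂, s₃, hPs, d₁, d₂, d₃, d₄, d₅, d₆⟩ := exists_center_in_gap h0 cov sep hP
    (ζ := ζ + 0.16) (by linarith) (by linarith) hl hu (by linarith) (by linarith)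
    (by linarith) (by linarith)
  obtain ⟨-, -, h⟩ := sep t₁ t₂ t₃ s₁ s₂ s₃ hPt hPs (by linarith) (by linarith) (by linarith)
    (by linarith) (by linarith) (by linarith) (by
      have f₁ : |t₁ - s₁| ≤ 1 := abs_le.2 ⟨by linarith, by linarith⟩
      have f₂ : |t₂ - s₂| ≤ 1 := abs_le.2 ⟨by linarith, by linarith⟩
      have f₃ : |t₃ - s₃| ≤ 1 := abs_le.2 ⟨by linarith, by linarith⟩
      linarith)
  linarith

/-- A covering by `ℓ¹`-balls of radius `2` is not an almost packing near any of its members. -/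
theorem CoversL1.not_almostPacksL1 {P : ℝ → ℝ → ℝ → Prop} (h0 : P 0 0 0) (cov : CoversL1 P) :
    ¬ AlmostPacksL1 P := by
  intro sep
  obtain ⟨a, b, c, hP, ha, hb, hc, hl, hu, -⟩ := exists_center_beyond_face h0 cov sep
    (v₁ := 1.201) (v₂ := 0.4) (v₃ := 0.4) (by norm_num) (by norm_num) (by norm_num) (by norm_num)
  rcases le_total b c with h | h
  · exact not_packs_of_center_le h0 cov sep hP (by linarith) (by linarith) (by linarith) hl hu h
  · refine not_packs_of_center_le (P := fun x y z => P x z y) (a := a) (b := c) (c := b) h0 ?_ ?_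
      hP (by linarith) (by linarith) (by linarith) (by linarith) (by linarith) h
    · intro x y z
      obtain ⟨p, q, r, hp, h⟩ := cov x z y
      exact ⟨p, r, q, hp, by linarith⟩
    · intro a b c a' b' c' h h' h₁ h₂ h₃ h₄ h₅ h₆ hlt
      obtain ⟨i, j, k⟩ := sep a c b a' c' b' h h' h₁ h₂ h₅ h₆ h₃ h₄ (by linarith)
      exact ⟨i, k, j⟩

/-- The body-centered cubic grid of mesh `1/20` filling `[-3, 6]³`. -/
noncomputable def bccPoint (i : Bool × (Fin 3 → Fin 182)) : Fin 3 → ℝ :=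
  fun j => ((i.2 j : ℕ) + (if i.1 then 1 / 2 else 0)) / 20 - 3.05

lemma exists_nearest_grid_coord {p : ℝ} (hl : -3 ≤ p) (hu : p ≤ 6) :
    ∃ k k' : Fin 182, ∃ d : ℝ, |p - ((k : ℕ) / 20 - 3.05)| ≤ d ∧
      |p - (((k' : ℕ) + 1 / 2) / 20 - 3.05)| ≤ 1 / 40 - d := by
  set w := (p + 3.05) * 20 with hw
  have hw1 : 1 ≤ w := by rw [hw]; linarith
  have hw2 : w ≤ 181 := by rw [hw]; linarith
  obtain ⟨m, hm⟩ : ∃ m, m = ⌊w⌋₊ := ⟨_, rfl⟩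
  have m1 : (m : ℝ) ≤ w := hm ▸ Nat.floor_le (by linarith)
  have m2 : w < m + 1 := hm ▸ Nat.lt_floor_add_one w
  have m3 : m ≤ 181 := by
    have : (m : ℝ) ≤ 181 := m1.trans hw2
    exact_mod_cast this
  have hp : p = w / 20 - 3.05 := by rw [hw]; ring
  rcases le_or_gt w (m + 1 / 2) with h | h
  · refine ⟨⟨m, by omega⟩, ⟨m, by omega⟩, (w - m) / 20, ?_, ?_⟩ <;>
      simp only [hp, abs_le] <;> constructor <;> linarith
  · have m4 : m + 1 ≤ 181 := by
      have : (m : ℝ) < 181 := by linarith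
      have : m < 181 := by exact_mod_cast this
      omega
    refine ⟨⟨m + 1, by omega⟩, ⟨m, by omega⟩, (m + 1 - w) / 20, ?_, ?_⟩ <;>
      simp only [hp, abs_le] <;> push_cast <;> constructor <;> linarith

/-- Each point of `[-3, 6]³` has `ℓ¹`-distance at most `3/80` to the grid. -/
lemma exists_bccPoint_near {p : Fin 3 → ℝ} (hl : ∀ j, -3 ≤ p j) (hu : ∀ j, p j ≤ 6) :
    ∃ i, |p 0 - bccPoint i 0| + |p 1 - bccPoint i 1| + |p 2 - bccPoint i 2| ≤ 0.0375 := by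
  choose k k' d hk hk' using fun j => exists_nearest_grid_coord (hl j) (hu j)
  rcases le_or_gt (d 0 + d 1 + d 2) 0.0375 with h | h
  · refine ⟨(false, k), ?_⟩
    simp only [bccPoint, Bool.false_eq_true, if_false, add_zero]
    linarith [hk 0, hk 1, hk 2]
  · refine ⟨(true, k'), ?_⟩
    simp only [bccPoint, if_true]
    linarith [hk' 0, hk' 1, hk' 2]

lemma abs_bccPoint_le (i : Bool × (Fin 3 → Fin 182)) (j : Fin 3) : |bccPoint i j| ≤ 7 := by
  have h : ((i.2 j : ℕ) : ℝ) ≤ 182 := by exact_mod_cast (i.2 j).2.le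
  have h' : (0 : ℝ) ≤ ((i.2 j : ℕ) : ℝ) := by positivity
  rw [abs_le]
  unfold bccPoint
  split_ifs <;> constructor <;> linarith

lemma mem_vadd_C₃ {x p : Fin 3 → ℝ} :
    p ∈ x +ᵥ C₃ ↔ |p 0 - x 0| + |p 1 - x 1| + |p 2 - x 2| ≤ 2 := by
  rw [Set.mem_vadd_set_iff_neg_vadd_mem]
  simp [C₃, neg_add_eq_sub]

/-- Around every point, some point of the grid is covered twice. -/
lemma exists_bccPoint_covered_twice {X : Set (Fin 3 → ℝ)} (hX : ⋃ x ∈ X, x +ᵥ C₃ = univ)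
    (y : Fin 3 → ℝ) :
    ∃ i, ∃ x ∈ X, ∃ x' ∈ X, x ≠ x' ∧ y + bccPoint i ∈ x +ᵥ C₃ ∧ y + bccPoint i ∈ x' +ᵥ C₃ := by
  by_contra! hU
  have hcov : ∀ p : Fin 3 → ℝ, ∃ x ∈ X, |p 0 - x 0| + |p 1 - x 1| + |p 2 - x 2| ≤ 2 := by
    intro p
    have : p ∈ ⋃ x ∈ X, x +ᵥ C₃ := hX ▸ mem_univ p
    simpa only [mem_iUnion, exists_prop, mem_vadd_C₃] using this
  obtain ⟨o, ho, hoy⟩ := hcov y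
  have o₀ := abs_le.1 (show |y 0 - o 0| ≤ 2 by
    linarith [abs_nonneg (y 1 - o 1), abs_nonneg (y 2 - o 2)])
  have o₁ := abs_le.1 (show |y 1 - o 1| ≤ 2 by
    linarith [abs_nonneg (y 0 - o 0), abs_nonneg (y 2 - o 2)])
  have o₂ := abs_le.1 (show |y 2 - o 2| ≤ 2 by
    linarith [abs_nonneg (y 0 - o 0), abs_nonneg (y 1 - o 1)])
  refine CoversL1.not_almostPacksL1 (P := fun a b c => o + ![a, b, c] ∈ X) ?_ ?_ ?_
  · convert ho using 1
    ext j; fin_cases j <;> simp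
  · intro a b c
    obtain ⟨x, hx, h⟩ := hcov (o + ![a, b, c])
    refine ⟨x 0 - o 0, x 1 - o 1, x 2 - o 2, ?_, ?_⟩
    · convert hx using 1
      ext j; fin_cases j <;> simp
    · simp only [Pi.add_apply, Matrix.cons_val_zero, Matrix.cons_val_one, Matrix.cons_val] at h
      rwa [show a - (x 0 - o 0) = o 0 + a - x 0 by ring,
        show b - (x 1 - o 1) = o 1 + b - x 1 by ring, show c - (x 2 - o 2) = o 2 + c - x 2 by ring]
  · intro a b c a' b' c' h h' h₁ h₂ h₃ h₄ h₅ h₆ hlt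
    obtain ⟨i, hi⟩ := exists_bccPoint_near
      (p := o - y + ![(a + a') / 2, (b + b') / 2, (c + c') / 2])
      (by intro j; fin_cases j <;> simp <;> linarith)
      (by intro j; fin_cases j <;> simp <;> linarith)
    simp only [Pi.add_apply, Pi.sub_apply, Matrix.cons_val_zero, Matrix.cons_val_one,
      Matrix.cons_val] at hi
    have key : ∀ u w r s g : ℝ, |r + g - (s + u)| ≤
        |s - r + (u + w) / 2 - g| + |u - w| / 2 := by
      intro u w r s g
      rw [abs_le]
      constructor <;>
      linarith [neg_abs_le (s - r + (u + w) / 2 - g), le_abs_self (s - r + (u + w) / 2 - g),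
        neg_abs_le (u - w), le_abs_self (u - w)]
    by_contra hne
    refine hU i _ h _ h' ?_ ?_ ?_
    · intro heq
      refine hne ⟨?_, ?_, ?_⟩
      · simpa using congrFun heq 0
      · simpa using congrFun heq 1
      · simpa using congrFun heq 2
    · rw [mem_vadd_C₃]
      simp only [Pi.add_apply, Matrix.cons_val_zero, Matrix.cons_val_one, Matrix.cons_val]
      linarith [key a a' (y 0) (o 0) (bccPoint i 0), key b b' (y 1) (o 1) (bccPoint i 1),
        key c c' (y 2) (o 2) (bccPoint i 2)]
    · rw [mem_vadd_C₃]
      simp only [Pi.add_apply, Matrix.cons_val_zero, Matrix.cons_val_one, Matrix.cons_val]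
      have k₀ := key a' a (y 0) (o 0) (bccPoint i 0)
      have k₁ := key b' b (y 1) (o 1) (bccPoint i 1)
      have k₂ := key c' c (y 2) (o 2) (bccPoint i 2)
      rw [add_comm a' a, abs_sub_comm a' a] at k₀
      rw [add_comm b' b, abs_sub_comm b' b] at k₁
      rw [add_comm c' c, abs_sub_comm c' c] at k₂
      linarith

/-- The number of translates of `K` by elements of `X` that contain a given point. -/
noncomputable def coveringMultiplicity (K X : Set (Fin 3 → ℝ)) (p : Fin 3 → ℝ) : ℝ≥0∞ :=
  ∑' x : X, ((x : Fin 3 → ℝ) +ᵥ K).indicator 1 p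

lemma one_le_coveringMultiplicity {K X : Set (Fin 3 → ℝ)} (hX : ⋃ x ∈ X, x +ᵥ K = univ)
    (p : Fin 3 → ℝ) : 1 ≤ coveringMultiplicity K X p := by
  have : p ∈ ⋃ x ∈ X, x +ᵥ K := hX ▸ mem_univ p
  simp only [mem_iUnion, exists_prop] at this
  obtain ⟨x, hx, hp⟩ := this
  calc (1 : ℝ≥0∞) = (x +ᵥ K).indicator 1 p := by simp [indicator_of_mem hp]
    _ ≤ _ := ENNReal.le_tsum (f := fun x : X => ((x : Fin 3 → ℝ) +ᵥ K).indicator 1 p) ⟨x, hx⟩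

lemma two_le_coveringMultiplicity {K X : Set (Fin 3 → ℝ)} {x x' p : Fin 3 → ℝ} (hx : x ∈ X)
    (hx' : x' ∈ X) (hne : x ≠ x') (hp : p ∈ x +ᵥ K) (hp' : p ∈ x' +ᵥ K) :
    2 ≤ coveringMultiplicity K X p := by
  have hne' : (⟨x, hx⟩ : X) ≠ ⟨x', hx'⟩ := fun h => hne (congrArg Subtype.val h)
  classical
  calc (2 : ℝ≥0∞) = ∑ z ∈ ({⟨x, hx⟩, ⟨x', hx'⟩} : Finset X),
        ((z : Fin 3 → ℝ) +ᵥ K).indicator 1 p := by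
        rw [Finset.sum_pair hne']
        simp only [indicator_of_mem hp, indicator_of_mem hp', Pi.one_apply]
        norm_num
    _ ≤ _ := ENNReal.sum_le_tsum _

lemma setLIntegral_coveringMultiplicity {K X Q : Set (Fin 3 → ℝ)} (hX : X.Countable)
    (hK : MeasurableSet K) :
    ∫⁻ p in Q, coveringMultiplicity K X p = ∑' x : X, volume (Q ∩ ((x : Fin 3 → ℝ) +ᵥ K)) := by
  have := hX.to_subtype
  have hm (x : X) : MeasurableSet ((x : Fin 3 → ℝ) +ᵥ K) := hK.const_vadd _
  unfold coveringMultiplicity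
  rw [lintegral_tsum fun x => (measurable_one.indicator (hm x)).aemeasurable]
  congr with x
  rw [lintegral_indicator_one (hm x), Measure.restrict_apply (hm x), inter_comm]

lemma measurable_coveringMultiplicity {K X : Set (Fin 3 → ℝ)} (hX : X.Countable)
    (hK : MeasurableSet K) : Measurable (coveringMultiplicity K X) := by
  have := hX.to_subtype
  exact Measurable.tsum fun x => measurable_one.indicator (hK.const_vadd _)

lemma cube_eq_Icc (R : ℝ) : cube R = Icc (fun _ => -R) (fun _ => R) := by
  ext p
  simp only [cube, mem_ofPred_eq, mem_Icc, Pi.le_def, abs_le, forall_and]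

lemma measurableSet_cube (R : ℝ) : MeasurableSet (cube R) := by
  rw [cube_eq_Icc]; exact measurableSet_Icc

lemma volume_cube {R : ℝ} (hR : 0 ≤ R) : volume (cube R) = ENNReal.ofReal ((2 * R) ^ 3) := by
  rw [cube_eq_Icc, Real.volume_Icc_pi, ENNReal.ofReal_pow (by linarith)]
  simp [two_mul]

lemma setLIntegral_cube_add_le {f : (Fin 3 → ℝ) → ℝ≥0∞} {v : Fin 3 → ℝ} {r : ℝ}
    (hv : ∀ j, |v j| ≤ r) (R : ℝ) :
    ∫⁻ p in cube R, f (p + v) ≤ ∫⁻ p in cube (R + r), f p := by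
  rw [← lintegral_indicator (measurableSet_cube _), ← lintegral_indicator (measurableSet_cube _),
    ← lintegral_add_right_eq_self ((cube (R + r)).indicator f) v]
  refine lintegral_mono fun p => ?_
  by_cases hp : p ∈ cube R
  · have : p + v ∈ cube (R + r) := fun j => (abs_add_le _ _).trans (add_le_add (hp j) (hv j))
    rw [indicator_of_mem hp, indicator_of_mem this]
  · simp [indicator_of_notMem hp]

/-- If every translate of a finite configuration is covered with total multiplicity exceeding its
size, then the covering has excess over large cubes. -/
lemma card_add_one_mul_volume_cube_le {ι : Type*} [Fintype ι] {f : (Fin 3 → ℝ) → ℝ≥0∞}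
    (hf : Measurable f) {v : ι → Fin 3 → ℝ} {r : ℝ} (hv : ∀ i j, |v i j| ≤ r)
    (h : ∀ p, (Fintype.card ι + 1 : ℝ≥0∞) ≤ ∑ i, f (p + v i)) (R : ℝ) :
    (Fintype.card ι + 1 : ℝ≥0∞) * volume (cube R) ≤
      Fintype.card ι * ∫⁻ p in cube (R + r), f p := by
  calc (Fintype.card ι + 1 : ℝ≥0∞) * volume (cube R)
      = ∫⁻ _ in cube R, (Fintype.card ι + 1 : ℝ≥0∞) := by rw [setLIntegral_const]
    _ ≤ ∫⁻ p in cube R, ∑ i, f (p + v i) := lintegral_mono h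
    _ = ∑ i, ∫⁻ p in cube R, f (p + v i) :=
        lintegral_finsetSum _ fun i _ => hf.comp (measurable_add_const _)
    _ ≤ ∑ _i : ι, ∫⁻ p in cube (R + r), f p :=
        Finset.sum_le_sum fun i _ => setLIntegral_cube_add_le (hv i) R
    _ = _ := by simp

lemma card_add_one_le_sum {ι : Type*} [Fintype ι] {g : ι → ℝ≥0∞} (h : ∀ i, 1 ≤ g i)
    {i₀ : ι} (h₀ : 2 ≤ g i₀) : (Fintype.card ι + 1 : ℝ≥0∞) ≤ ∑ i, g i := by
  classical
  calc (Fintype.card ι + 1 : ℝ≥0∞) = ∑ i, (1 + if i = i₀ then 1 else 0) := by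
        simp [Finset.sum_add_distrib]
    _ ≤ _ := by
        refine Finset.sum_le_sum fun i _ => ?_
        split_ifs with hi
        · rw [hi]; exact le_of_eq_of_le one_add_one_eq_two h₀
        · simpa using h i

lemma measurableSet_C₃ : MeasurableSet C₃ :=
  (isClosed_le (by fun_prop) continuous_const).measurableSet

lemma eventually_mul_volume_cube_le {N : ℕ} {c r : ℝ} (hc : 0 ≤ c) (hcN : c * N < N + 1)
    {S : ℝ → ℝ≥0∞} (hS : ∀ R, (N + 1 : ℝ≥0∞) * volume (cube R) ≤ N * S (R + r)) :
    ∀ᶠ R in atTop, ENNReal.ofReal c ≤ S R / volume (cube R) := by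
  have hN : (0 : ℝ) < N + 1 := by positivity
  have hlim : Tendsto (fun R : ℝ => (N + 1 : ℝ) * (1 - r / R) ^ 3) atTop (nhds (N + 1 : ℝ)) := by
    have : Tendsto (fun R : ℝ => r / R) atTop (nhds 0) := tendsto_const_nhds.div_atTop tendsto_id
    simpa using ((this.const_sub 1).pow 3).const_mul (N + 1 : ℝ)
  filter_upwards [hlim.eventually_const_lt hcN, eventually_gt_atTop r, eventually_gt_atTop 0]
    with R hR hr h0
  have hpos : 0 < (2 * R) ^ 3 := by positivity
  have hvol := volume_cube h0.le
  rw [ENNReal.le_div_iff_mul_le (by simp [hvol, hpos]) (by simp [hvol]), hvol,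
    ← ENNReal.ofReal_mul hc]
  rcases Nat.eq_zero_or_pos N with rfl | hNpos
  · have h := hS (R - r)
    rw [volume_cube (by linarith)] at h
    have : 0 < (2 * (R - r)) ^ 3 := pow_pos (by linarith) 3
    simp at h
    linarith
  have hN0 : (N : ℝ≥0∞) ≠ 0 := by exact_mod_cast hNpos.ne'
  rw [← ENNReal.mul_le_mul_iff_right hN0 (ENNReal.natCast_ne_top N)]
  have h := hS (R - r)
  rw [sub_add_cancel, volume_cube (by linarith)] at h
  refine le_trans ?_ h
  rw [← ENNReal.ofReal_natCast, show (ENNReal.ofReal N + 1 : ℝ≥0∞) = ENNReal.ofReal (N + 1) by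
      rw [ENNReal.ofReal_add (by positivity) zero_le_one, ENNReal.ofReal_one],
    ← ENNReal.ofReal_mul (by positivity), ← ENNReal.ofReal_mul hN.le]
  refine ENNReal.ofReal_le_ofReal ?_
  have e : (N + 1 : ℝ) * (2 * (R - r)) ^ 3 = (N + 1) * (1 - r / R) ^ 3 * (2 * R) ^ 3 := by
    field_simp
  rw [e, ← mul_assoc, mul_comm (N : ℝ) c]
  exact mul_le_mul_of_nonneg_right hR.le hpos.le

/-- The translative covering density of the regular octahedron satisfies
`θᵗ(C₃) ≥ 1 + 4/6¹⁰ > 1 + 6.6·10⁻⁸`. -/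
theorem octahedron_translative_covering_density_lb :
    (1 + 4 / 6 ^ 10 : ℝ≥0∞) ≤ translativeCoveringDensity C₃ ∧
      (1 + ENNReal.ofReal (6.6e-8) : ℝ≥0∞) < 1 + 4 / 6 ^ 10 := by
  have hε : (4 / 6 ^ 10 : ℝ≥0∞) = ENNReal.ofReal (4 / 6 ^ 10) := by
    rw [ENNReal.ofReal_div_of_pos (by positivity), ENNReal.ofReal_pow (by norm_num)]
    norm_num
  rw [hε]
  constructor
  · have hc : (1 : ℝ≥0∞) + ENNReal.ofReal (4 / 6 ^ 10) = ENNReal.ofReal (1 + 4 / 6 ^ 10) := by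
      rw [ENNReal.ofReal_add zero_le_one (by positivity), ENNReal.ofReal_one]
    rw [hc]
    refine le_iInf₂ fun X ⟨hd, hX⟩ => ?_
    have hcount : X.Countable := countable_coe_iff.1 (TopologicalSpace.separableSpace_iff_countable.1
      inferInstance)
    refine le_liminf_of_le (by isBoundedDefault) ?_
    simp only [← setLIntegral_coveringMultiplicity hcount measurableSet_C₃]
    obtain ⟨N, hN⟩ : ∃ N, Fintype.card (Bool × (Fin 3 → Fin 182)) = N := ⟨_, rfl⟩
    refine eventually_mul_volume_cube_le (N := N) (r := 7) (by positivity) ?_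
      (S := fun R => ∫⁻ p in cube R, coveringMultiplicity C₃ X p) ?_
    · have hN' : (N : ℝ) = 2 * 182 ^ 3 := by
        rw [← hN, Fintype.card_prod, Fintype.card_bool, Fintype.card_pi_const, Fintype.card_fin]
        norm_num
      rw [hN']
      norm_num
    · rw [← hN]
      refine card_add_one_mul_volume_cube_le (measurable_coveringMultiplicity hcount
        measurableSet_C₃) (v := bccPoint) abs_bccPoint_le fun p => ?_
      obtain ⟨i, x, hx, x', hx', hne, hp, hp'⟩ := exists_bccPoint_covered_twice hX p
      exact card_add_one_le_sum (fun i => one_le_coveringMultiplicity hX _)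
        (two_le_coveringMultiplicity hx hx' hne hp hp')
  · refine ENNReal.add_lt_add_left ENNReal.one_ne_top ?_
    rw [ENNReal.ofReal_lt_ofReal_iff (by positivity)]
    norm_num
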